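/- Let n ≥ 1 and m ≥ 1, let t be a rational number with 1/3 ≤ t < 1/2 such that n' := 3n/(1 − 2t) is an integer, let χ : Fin (3n) → Fin 3 be a map each of whose three fibers has exactly n elements, and let e : Fin m → Finset (Fin (3n)) be an injective family such that each e(j) has exactly 3 elements, one in each fiber of χ. Define the table T : Fin n' → Fin m → ℕ by: for rows i < 3n, T(i)(j) = 0 if i ∈ e(j) and T(i)(j) = i + 1 otherwise; for rows 3n ≤ i < n', T(i)(j) = i + 1 for all j. Define SA : Fin n' → Fin 4 by SA(i) = χ(i) for i < 3n and SA(i) = 3 for i ≥ 3n. Let d be the metric on Fin 4 with d(i,i) = 0, d(i,j) = 1 for distinct i, j ∈ {0,1,2}, and d(i,3) = d(3,i) = 1/2 for i ∈ {0,1,2}. Then the following are equivalent: (1) there exists M ⊆ Fin m with |M| = n such that the union of e(j) over j ∈ M equals all of Fin (3n); (2) there exists a partition P of the rows Fin n' such that every block B of P satisfies EMD_d(P(B), P(Fin n')) ≤ t and cost(P) ≤ 3n·(m − 1). -/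

import Mathlib

open Finset

attribute [local instance] Classical.propDecidable

noncomputable def EMD {s : ℕ} (d : Fin s → Fin s → ℝ) (X Y : Fin s → ℝ) : ℝ :=
  sInf { c : ℝ | ∃ f : Fin s → Fin s → ℝ,
    (∀ i j, 0 ≤ f i j) ∧ (∀ i, ∑ j, f i j = X i) ∧ (∀ j, ∑ i, f i j = Y j) ∧
    c = ∑ i, ∑ j, d i j * f i j }

/-- The metric on `Fin 4` with distance 1 between distinct points of `{0,1,2}`
and distance 1/2 between `3` and each of `0,1,2`. -/
noncomputable def d4 : Fin 4 → Fin 4 → ℝ := fun i j =>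
  if i = j then 0 else if i = 3 ∨ j = 3 then 1/2 else 1

/-- The SA distribution of a set `B` of rows, given a sensitive-attribute map `SA`. -/
noncomputable def SAdist {n s : ℕ} (SA : Fin n → Fin s) (B : Finset (Fin n)) :
    Fin s → ℝ :=
  fun i => ((B.filter (fun r => SA r = i)).card : ℝ) / B.card

/-- The suppression cost of a set `B` of rows of table `T`. -/
noncomputable def suppCost {n : ℕ} {ι α : Type*} [Fintype ι]
    (T : Fin n → ι → α) (B : Finset (Fin n)) : ℕ :=
  B.card *
    (Finset.univ.filter (fun j : ι => ¬ ∀ i ∈ B, ∀ i' ∈ B, T i j = T i' j)).card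

/-- `P` is a partition of the rows `Fin n`. -/
def IsRowPartition {n : ℕ} (P : Finset (Finset (Fin n))) : Prop :=
  (∀ B ∈ P, B.Nonempty) ∧
  (∀ B ∈ P, ∀ B' ∈ P, B ≠ B' → Disjoint B B') ∧
  (∀ i : Fin n, ∃ B ∈ P, i ∈ B)

/-- The cost of a partition: the sum of the suppression costs of its blocks. -/
noncomputable def partCost {n : ℕ} {ι α : Type*} [Fintype ι]
    (T : Fin n → ι → α) (P : Finset (Finset (Fin n))) : ℕ :=
  ∑ B ∈ P, suppCost T B


lemma EMD_le_of_flow {s : ℕ} {d : Fin s → Fin s → ℝ} (hd : ∀ i j, 0 ≤ d i j)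
    {X Y : Fin s → ℝ} (f : Fin s → Fin s → ℝ) (h0 : ∀ i j, 0 ≤ f i j)
    (h1 : ∀ i, ∑ j, f i j = X i) (h2 : ∀ j, ∑ i, f i j = Y j) {c : ℝ}
    (hc : ∑ i, ∑ j, d i j * f i j ≤ c) : EMD d X Y ≤ c := by
  refine le_trans (csInf_le ⟨0, ?_⟩ ⟨f, h0, h1, h2, rfl⟩) hc
  rintro x ⟨g, g0, -, -, rfl⟩
  exact Finset.sum_nonneg fun i _ => Finset.sum_nonneg fun j _ => mul_nonneg (hd i j) (g0 i j)

lemma le_EMD_of_potential {s : ℕ} {d : Fin s → Fin s → ℝ} {X Y : Fin s → ℝ}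
    (hX : ∀ i, 0 ≤ X i) (hY : ∀ i, 0 ≤ Y i) (sX : ∑ i, X i = 1) (sY : ∑ i, Y i = 1)
    (p : Fin s → ℝ) (hp : ∀ i j, p i - p j ≤ d i j) :
    ∑ i, p i * X i - ∑ j, p j * Y j ≤ EMD d X Y := by
  refine le_csInf ⟨_, fun i j => X i * Y j, fun i j => mul_nonneg (hX i) (hY j), ?_, ?_, rfl⟩ ?_
  · intro i; rw [← Finset.mul_sum, sY, mul_one]
  · intro j; rw [← Finset.sum_mul, sX, one_mul]
  · rintro c ⟨f, f0, f1, f2, rfl⟩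
    have e1 : ∑ i, p i * X i = ∑ i, ∑ j, p i * f i j :=
      Finset.sum_congr rfl fun i _ => by rw [← f1 i, Finset.mul_sum]
    have e2 : ∑ j, p j * Y j = ∑ i, ∑ j, p j * f i j := by
      rw [Finset.sum_comm]
      exact Finset.sum_congr rfl fun i _ => by rw [← f2 i, Finset.mul_sum]
    rw [e1, e2, ← Finset.sum_sub_distrib]
    refine Finset.sum_le_sum fun i _ => ?_
    rw [← Finset.sum_sub_distrib]
    refine Finset.sum_le_sum fun j _ => ?_
    rw [← sub_mul]
    exact mul_le_mul_of_nonneg_right (hp i j) (f0 i j)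

lemma d4_nonneg (i j : Fin 4) : 0 ≤ d4 i j := by
  unfold d4; split_ifs <;> norm_num

lemma SAdist_nonneg {n s : ℕ} (SA : Fin n → Fin s) (B : Finset (Fin n)) (i : Fin s) :
    0 ≤ SAdist SA B i := by unfold SAdist; positivity

lemma SAdist_sum {n s : ℕ} (SA : Fin n → Fin s) (B : Finset (Fin n)) (hB : B.Nonempty) :
    ∑ i, SAdist SA B i = 1 := by
  unfold SAdist
  rw [← Finset.sum_div, ← Nat.cast_sum,
    ← Finset.card_eq_sum_card_fiberwise (s := B) (t := Finset.univ) (f := SA) (by intro x _; simp)]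
  have := hB.card_pos
  field_simp

/-- A distribution missing value 3 and one of the values `0,1,2` is far from the global one. -/
lemma EMD_far {t : ℝ} (ht0 : 0 ≤ t) (ht2 : t < 1 / 2) {X Y : Fin 4 → ℝ} (hX : ∀ i, 0 ≤ X i)
    (sX : ∑ i, X i = 1) (c : Fin 3) (hc : X c.castSucc = 0) (h3 : X 3 = 0)
    (hY : ∀ v : Fin 3, Y v.castSucc = (1 - 2 * t) / 3) (hY3 : Y 3 = 2 * t) :
    t < EMD d4 X Y := by
  have y0 := hY 0
  have y1 := hY 1
  have y2 := hY 2
  simp only [Fin.castSucc_zero, Fin.castSucc_one] at y0 y1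
  have y2' : Y 2 = (1 - 2 * t) / 3 := y2
  have hYn : ∀ i, 0 ≤ Y i := by
    intro i
    fin_cases i
    · show 0 ≤ Y 0
      rw [y0]; linarith
    · show 0 ≤ Y 1
      rw [y1]; linarith
    · show 0 ≤ Y 2
      rw [y2']; linarith
    · show 0 ≤ Y 3
      rw [hY3]; linarith
  have sY : ∑ i, Y i = 1 := by
    rw [Fin.sum_univ_four, y0, y1, y2', hY3]; ring
  have key := le_EMD_of_potential (d := d4) hX hYn sX sY
    (fun i => if i = 3 then 1 / 2 else if i = c.castSucc then 0 else 1) (by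
      intro i j
      unfold d4
      fin_cases i <;> fin_cases j <;> fin_cases c <;> norm_num [Fin.ext_iff])
  refine lt_of_lt_of_le ?_ key
  rw [Fin.sum_univ_four] at sX
  rw [Fin.sum_univ_four, Fin.sum_univ_four, y0, y1, y2', hY3, h3]
  fin_cases c
  · have hc' : X 0 = 0 := hc
    simp
    linarith
  · have hc' : X 1 = 0 := hc
    simp
    linarith
  · have hc' : X 2 = 0 := hc
    simp
    linarith

lemma EMD_triple {t : ℝ} (ht0 : 0 ≤ t) (ht2 : t < 1 / 2) {X Y : Fin 4 → ℝ}
    (hX : ∀ v : Fin 3, X v.castSucc = 1 / 3) (h3 : X 3 = 0)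
    (hY : ∀ v : Fin 3, Y v.castSucc = (1 - 2 * t) / 3) (hY3 : Y 3 = 2 * t) :
    EMD d4 X Y ≤ t := by
  have y0 : Y 0 = _ := hY 0
  have y1 : Y 1 = _ := hY 1
  have y2 : Y 2 = _ := hY 2
  have x0 : X 0 = _ := hX 0
  have x1 : X 1 = _ := hX 1
  have x2 : X 2 = _ := hX 2
  refine EMD_le_of_flow d4_nonneg
    (fun i j => if i = 3 then 0 else if j = 3 then 2 * t / 3 else if i = j then (1 - 2 * t) / 3
      else 0) ?_ ?_ ?_ ?_
  · intro i j
    split_ifs <;> linarith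
  · intro i
    fin_cases i <;> simp [Fin.sum_univ_four, x0, x1, x2, h3] <;> ring
  · intro i
    fin_cases i <;> simp [Fin.sum_univ_four, y0, y1, y2, hY3] <;> ring
  · simp [Fin.sum_univ_four, d4]
    linarith

lemma EMD_single {t : ℝ} (ht1 : 1 / 3 ≤ t) (ht2 : t < 1 / 2) {X Y : Fin 4 → ℝ}
    (hX : ∀ v : Fin 3, X v.castSucc = 0) (h3 : X 3 = 1)
    (hY : ∀ v : Fin 3, Y v.castSucc = (1 - 2 * t) / 3) (hY3 : Y 3 = 2 * t) :
    EMD d4 X Y ≤ t := by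
  have y0 : Y 0 = _ := hY 0
  have y1 : Y 1 = _ := hY 1
  have y2 : Y 2 = _ := hY 2
  have x0 : X 0 = _ := hX 0
  have x1 : X 1 = _ := hX 1
  have x2 : X 2 = _ := hX 2
  refine EMD_le_of_flow d4_nonneg
    (fun i j => if i = 3 then (if j = 3 then 2 * t else (1 - 2 * t) / 3) else 0) ?_ ?_ ?_ ?_
  · intro i j
    split_ifs <;> linarith
  · intro i
    fin_cases i <;> simp [Fin.sum_univ_four, x0, x1, x2, h3]
    ring
  · intro i
    fin_cases i <;> simp [Fin.sum_univ_four, y0, y1, y2, hY3]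
  · simp [Fin.sum_univ_four, d4]
    linarith

lemma filter_map_card {n n' : ℕ} (h : 3 * n ≤ n') (χ : Fin (3 * n) → Fin 3) (SA : Fin n' → Fin 4)
    (hSA : ∀ i, SA (Fin.castLEEmb h i) = (χ i).castSucc) (A : Finset (Fin (3 * n))) (v : Fin 3) :
    ((A.map (Fin.castLEEmb h)).filter (fun r => SA r = v.castSucc)).card =
      (A.filter (fun i => χ i = v)).card := by
  rw [Finset.filter_map, Finset.card_map]
  congr 1
  ext i
  have := hSA i
  simp only [Finset.mem_filter, Function.comp_apply, this, Fin.castSucc_inj]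

lemma exists_castLE {a b : ℕ} (h : a ≤ b) (i : Fin b) (hi : (i : ℕ) < a) :
    Fin.castLEEmb h ⟨i, hi⟩ = i := rfl

lemma suppCost_le_of_agree {n m : ℕ} {α : Type*} (T : Fin n → Fin m → α) (B : Finset (Fin n))
    (j : Fin m) (hj : ∀ i ∈ B, ∀ i' ∈ B, T i j = T i' j) : suppCost T B ≤ B.card * (m - 1) := by
  unfold suppCost
  refine Nat.mul_le_mul_left _ ?_
  have : (Finset.univ.erase j).card = m - 1 := by simp
  rw [← this]
  refine Finset.card_le_card fun k hk => ?_
  refine Finset.mem_erase.2 ⟨?_, Finset.mem_univ _⟩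
  rintro rfl
  exact (Finset.mem_filter.1 hk).2 hj

lemma suppCost_eq_of_not_agree {n m : ℕ} {α : Type*} (T : Fin n → Fin m → α) (B : Finset (Fin n))
    (h : ∀ j, ¬ ∀ i ∈ B, ∀ i' ∈ B, T i j = T i' j) : suppCost T B = B.card * m := by
  unfold suppCost
  rw [Finset.filter_true_of_mem (fun j _ => h j)]
  simp

lemma le_suppCost {n m : ℕ} {α : Type*} (T : Fin n → Fin m → α) (B : Finset (Fin n)) (j : Fin m)
    (h : ∀ k, (∀ i ∈ B, ∀ i' ∈ B, T i k = T i' k) → k = j) : B.card * (m - 1) ≤ suppCost T B := by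
  unfold suppCost
  refine Nat.mul_le_mul_left _ ?_
  have : (Finset.univ.erase j).card = m - 1 := by simp
  rw [← this]
  refine Finset.card_le_card fun k hk => ?_
  exact Finset.mem_filter.2 ⟨Finset.mem_univ _, fun hag => (Finset.mem_erase.1 hk).1 (h k hag)⟩

theorem core (n m n' : ℕ) (hn : 1 ≤ n) (hm : 1 ≤ m)
    (t : ℝ) (ht1 : 1 / 3 ≤ t) (ht2 : t < 1 / 2)
    (hle : 3 * n ≤ n') (hq : (n : ℝ) / n' = (1 - 2 * t) / 3)
    (χ : Fin (3 * n) → Fin 3)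
    (hχ : ∀ v : Fin 3, (Finset.univ.filter (fun i => χ i = v)).card = n)
    (e : Fin m → Finset (Fin (3 * n))) (hinj : Function.Injective e)
    (he3 : ∀ j, (e j).card = 3)
    (hfib : ∀ j, ∀ v : Fin 3, ((e j).filter (fun i => χ i = v)).card = 1)
    (SA : Fin n' → Fin 4) (hSA : ∀ i, SA (Fin.castLEEmb hle i) = (χ i).castSucc)
    (hSA3 : ∀ i : Fin n', ¬ (i : ℕ) < 3 * n → SA i = 3)
    (T : Fin n' → Fin m → ℕ)
    (hT0 : ∀ i j, i ∈ e j → T (Fin.castLEEmb hle i) j = 0)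
    (hT1 : ∀ (i : Fin n') j, (¬ ∃ k ∈ e j, Fin.castLEEmb hle k = i) → T i j = i + 1) :
    (∃ M : Finset (Fin m), M.card = n ∧ M.biUnion e = Finset.univ) ↔
    (∃ P : Finset (Finset (Fin n')), IsRowPartition P ∧
      (∀ B ∈ P, EMD d4 (SAdist SA B) (SAdist SA Finset.univ) ≤ t) ∧
      partCost T P ≤ 3 * n * (m - 1)) := by
  set g := Fin.castLEEmb hle with hg
  have glt : ∀ i, ((g i : Fin n') : ℕ) < 3 * n := fun i => i.2
  have hSAlt : ∀ i : Fin n', SA i ≠ 3 → (i : ℕ) < 3 * n := fun i hi => by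
    by_contra h; exact hi (hSA3 i h)
  have h3v : ∀ v : Fin 3, v.castSucc ≠ (3 : Fin 4) := by decide
  have : Nonempty (Fin n') := ⟨⟨0, by omega⟩⟩
  -- the global distribution
  have hY : ∀ v : Fin 3, SAdist SA Finset.univ v.castSucc = (1 - 2 * t) / 3 := by
    intro v
    have e1 : (Finset.univ.filter (fun r => SA r = v.castSucc)) =
        ((Finset.univ.map g).filter (fun r => SA r = v.castSucc)) := by
      ext i
      simp only [Finset.mem_filter, Finset.mem_univ, true_and, Finset.mem_map]
      refine ⟨fun h => ⟨⟨⟨i, hSAlt i (h ▸ h3v v)⟩, rfl⟩, h⟩, fun h => h.2⟩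
    unfold SAdist
    rw [e1, filter_map_card hle χ SA hSA, hχ, Finset.card_univ, Fintype.card_fin, hq]
  have hY3 : SAdist SA Finset.univ 3 = 2 * t := by
    have h := SAdist_sum SA Finset.univ Finset.univ_nonempty
    have h' := Fin.sum_univ_castSucc (SAdist SA Finset.univ)
    rw [h, Finset.sum_congr rfl (fun v _ => hY v)] at h'
    have h4 : SAdist SA Finset.univ (Fin.last 3) = SAdist SA Finset.univ 3 := rfl
    rw [h4] at h'
    simp at h'
    linarith
  constructor
  · rintro ⟨M, hM, hcov⟩
    have hsum : ∑ j ∈ M, (e j).card = (M.biUnion e).card := by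
      rw [hcov, Finset.card_univ, Fintype.card_fin, Finset.sum_congr rfl (fun j _ => he3 j)]
      simp [hM, mul_comm]
    have hdisj : (M : Set (Fin m)).PairwiseDisjoint e := by
      intro a ha b hb hab
      by_contra hnd
      have hlt : (M.biUnion e).card < ∑ j ∈ M, (e j).card := by
        have hM' : M = insert a (M.erase a) := (Finset.insert_erase ha).symm
        have hb' : b ∈ M.erase a := Finset.mem_erase.2 ⟨hab.symm, hb⟩
        rw [hM', Finset.biUnion_insert, Finset.sum_insert (Finset.notMem_erase _ _)]
        have h1 := Finset.card_union_add_card_inter (e a) ((M.erase a).biUnion e)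
        have h2 : ((M.erase a).biUnion e).card ≤ ∑ j ∈ M.erase a, (e j).card :=
          Finset.card_biUnion_le
        have h3 : 0 < (e a ∩ (M.erase a).biUnion e).card := by
          rw [Finset.card_pos]
          change ¬ Disjoint (e a) (e b) at hnd
          rw [Finset.not_disjoint_iff] at hnd
          obtain ⟨x, hx, hx'⟩ := hnd
          exact ⟨x, Finset.mem_inter.2 ⟨hx, Finset.mem_biUnion.2 ⟨b, hb', hx'⟩⟩⟩
        omega
      omega
    set P1 : Finset (Finset (Fin n')) := M.image (fun j => (e j).map g) with hP1
    set P2 : Finset (Finset (Fin n')) :=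
      (Finset.univ.filter (fun i : Fin n' => ¬ (i : ℕ) < 3 * n)).image (fun i => {i}) with hP2
    have c1 : ∀ B ∈ P1, ∃ j ∈ M, B = (e j).map g := by
      intro B hB
      obtain ⟨j, hj, rfl⟩ := Finset.mem_image.1 hB
      exact ⟨j, hj, rfl⟩
    have c2 : ∀ B ∈ P2, ∃ i : Fin n', (¬ (i : ℕ) < 3 * n) ∧ B = {i} := by
      intro B hB
      obtain ⟨j, hj, rfl⟩ := Finset.mem_image.1 hB
      exact ⟨j, by simpa using hj, rfl⟩
    have d12 : ∀ (i : Fin n'), (¬ (i : ℕ) < 3 * n) → ∀ j, i ∉ (e j).map g := by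
      intro i hi j hij
      obtain ⟨k, hk, rfl⟩ := Finset.mem_map.1 hij
      exact hi (glt k)
    refine ⟨P1 ∪ P2, ⟨?_, ?_, ?_⟩, ?_, ?_⟩
    · intro B hB
      rcases Finset.mem_union.1 hB with h | h
      · obtain ⟨j, hj, rfl⟩ := c1 B h
        rw [← Finset.card_pos, Finset.card_map, he3]; norm_num
      · obtain ⟨i, hi, rfl⟩ := c2 B h
        exact Finset.singleton_nonempty i
    · intro B hB B' hB' hne
      rcases Finset.mem_union.1 hB with h | h <;> rcases Finset.mem_union.1 hB' with h' | h'
      · obtain ⟨j, hj, rfl⟩ := c1 B h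
        obtain ⟨k, hk, rfl⟩ := c1 B' h'
        rw [Finset.disjoint_map]
        exact hdisj hj hk (fun hjk => hne (by rw [hjk]))
      · obtain ⟨j, hj, rfl⟩ := c1 B h
        obtain ⟨k, hk, rfl⟩ := c2 B' h'
        exact Finset.disjoint_singleton_right.2 (d12 k hk j)
      · obtain ⟨j, hj, rfl⟩ := c2 B h
        obtain ⟨k, hk, rfl⟩ := c1 B' h'
        exact Finset.disjoint_singleton_left.2 (d12 j hj k)
      · obtain ⟨j, hj, rfl⟩ := c2 B h
        obtain ⟨k, hk, rfl⟩ := c2 B' h'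
        refine Finset.disjoint_singleton_left.2 fun hjk => hne ?_
        rw [Finset.mem_singleton.1 hjk]
    · intro i
      by_cases hi : (i : ℕ) < 3 * n
      · have hmem : (⟨i, hi⟩ : Fin (3 * n)) ∈ M.biUnion e := by rw [hcov]; exact Finset.mem_univ _
        obtain ⟨j, hj, hij⟩ := Finset.mem_biUnion.1 hmem
        exact ⟨(e j).map g, Finset.mem_union_left _ (Finset.mem_image.2 ⟨j, hj, rfl⟩),
          Finset.mem_map.2 ⟨_, hij, rfl⟩⟩
      · exact ⟨{i}, Finset.mem_union_right _ (Finset.mem_image.2 ⟨i, by simpa using hi, rfl⟩),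
          Finset.mem_singleton_self i⟩
    · intro B hB
      rcases Finset.mem_union.1 hB with h | h
      · obtain ⟨j, hj, rfl⟩ := c1 B h
        refine EMD_triple (by linarith) ht2 ?_ ?_ hY hY3
        · intro v
          unfold SAdist
          rw [filter_map_card hle χ SA hSA, hfib, Finset.card_map, he3]
          norm_num
        · unfold SAdist
          rw [Finset.filter_eq_empty_iff.2]
          · simp
          · intro x hx
            obtain ⟨k, hk, rfl⟩ := Finset.mem_map.1 hx
            rw [hSA]; exact h3v _
      · obtain ⟨i, hi, rfl⟩ := c2 B h
        refine EMD_single ht1 ht2 ?_ ?_ hY hY3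
        · intro v
          unfold SAdist
          rw [Finset.filter_eq_empty_iff.2]
          · simp
          · intro x hx
            rw [Finset.mem_singleton.1 hx, hSA3 i hi]; exact (h3v _).symm
        · unfold SAdist
          rw [Finset.filter_true_of_mem]
          · simp
          · intro x hx
            rw [Finset.mem_singleton.1 hx, hSA3 i hi]
    · have k1 : ∀ B ∈ P1, suppCost T B ≤ 3 * (m - 1) := by
        intro B hB
        obtain ⟨j, hj, rfl⟩ := c1 B hB
        refine (suppCost_le_of_agree T _ j ?_).trans (by rw [Finset.card_map, he3])
        intro a ha b hb
        obtain ⟨a', ha', rfl⟩ := Finset.mem_map.1 ha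
        obtain ⟨b', hb', rfl⟩ := Finset.mem_map.1 hb
        rw [hT0 _ _ ha', hT0 _ _ hb']
      have k2 : ∀ B ∈ P2, suppCost T B = 0 := by
        intro B hB
        obtain ⟨i, hi, rfl⟩ := c2 B hB
        unfold suppCost
        simp
      unfold partCost
      have hd : Disjoint P1 P2 := by
        rw [Finset.disjoint_left]
        intro B h h'
        obtain ⟨j, hj, rfl⟩ := c1 B h
        obtain ⟨i, hi, hij⟩ := c2 _ h'
        exact d12 i hi j (by rw [hij]; exact Finset.mem_singleton_self i)
      rw [Finset.sum_union hd, Finset.sum_eq_zero k2, add_zero]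
      calc _ ≤ P1.card • (3 * (m - 1)) := Finset.sum_le_card_nsmul _ _ _ k1
        _ ≤ n * (3 * (m - 1)) := by
          rw [smul_eq_mul]
          exact Nat.mul_le_mul_right _ (hM ▸ Finset.card_image_le)
        _ = _ := by ring
  · rintro ⟨P, ⟨hne, hdisj, hcov⟩, hE, hcost⟩
    set U : Finset (Fin n') := Finset.univ.map g with hU
    have hUmem : ∀ i : Fin n', i ∈ U ↔ (i : ℕ) < 3 * n := by
      intro i
      rw [hU, Finset.mem_map]
      exact ⟨fun ⟨k, _, hk⟩ => hk ▸ glt k, fun h => ⟨⟨i, h⟩, Finset.mem_univ _, rfl⟩⟩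
    -- blocks without colour-3 rows contain all colours
    have hfull : ∀ B ∈ P, B ⊆ U → ∀ v : Fin 3, ∃ r ∈ B, SA r = v.castSucc := by
      intro B hB hBU v
      by_contra hcon
      push Not at hcon
      have hlt := EMD_far (t := t) (by linarith) ht2 (SAdist_nonneg SA B)
        (SAdist_sum SA B (hne B hB)) v (by
          unfold SAdist
          rw [Finset.filter_eq_empty_iff.2 (fun x hx => hcon x hx)]; simp) (by
          unfold SAdist
          rw [Finset.filter_eq_empty_iff.2]
          · simp
          · intro x hx
            obtain ⟨k, hk, rfl⟩ := Finset.mem_map.1 (hBU hx)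
            rw [hSA]; exact h3v _) hY hY3
      exact absurd (hE B hB) (not_le.2 hlt)
    have hcard3 : ∀ B ∈ P, B ⊆ U → 3 ≤ B.card := by
      intro B hB hBU
      have hsub : (Finset.univ.image (fun v : Fin 3 => v.castSucc)) ⊆ B.image SA := by
        intro x hx
        obtain ⟨v, _, rfl⟩ := Finset.mem_image.1 hx
        obtain ⟨r, hr, h⟩ := hfull B hB hBU v
        exact Finset.mem_image.2 ⟨r, hr, h⟩
      have h1 := Finset.card_le_card hsub
      rw [Finset.card_image_of_injective _ (Fin.castSucc_injective 3)] at h1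
      simp only [Finset.card_univ, Fintype.card_fin] at h1
      exact h1.trans Finset.card_image_le
    -- agreement in a column
    have hagree : ∀ B ∈ P, (B ∩ U).Nonempty → ∀ j, (∀ i ∈ B, ∀ i' ∈ B, T i j = T i' j) →
        B = (e j).map g := by
      intro B hB hBU j hj
      have hsub : B ⊆ (e j).map g := by
        by_contra hns
        rw [Finset.not_subset] at hns
        obtain ⟨x, hx, hxe⟩ := hns
        have hTx : T x j = x + 1 := hT1 x j (fun ⟨k, hk, h⟩ => hxe (Finset.mem_map.2 ⟨k, hk, h⟩))
        have hall : ∀ y ∈ B, y = x := by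
          intro y hy
          have hyx := hj y hy x hx
          rw [hTx] at hyx
          by_cases hye : ∃ k ∈ e j, g k = y
          · obtain ⟨k, hk, rfl⟩ := hye
            rw [hT0 _ _ hk] at hyx; omega
          · rw [hT1 y j hye] at hyx
            exact Fin.ext (by omega)
        have hBx : B ⊆ U := by
          obtain ⟨z, hz⟩ := hBU
          rw [Finset.mem_inter] at hz
          intro y hy
          rw [hall y hy, ← hall z hz.1]; exact hz.2
        have h3 := hcard3 B hB hBx
        have h1 : B.card ≤ 1 := Finset.card_le_one.2 (fun a ha b hb => by
          rw [hall a ha, hall b hb])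
        omega
      refine Finset.eq_of_subset_of_card_le hsub ?_
      rw [Finset.card_map, he3]
      exact hcard3 B hB (hsub.trans (Finset.map_subset_map.2 (Finset.subset_univ _)))
    have hgmap : Function.Injective (fun A : Finset (Fin (3 * n)) => A.map g) :=
      Finset.map_injective g
    -- lower bounds
    have hbad : ∀ B ∈ P, (B ∩ U).Nonempty → (¬ ∃ j, B = (e j).map g) →
        suppCost T B = B.card * m := by
      intro B hB hBU hno
      exact suppCost_eq_of_not_agree T B fun j hj => hno ⟨j, hagree B hB hBU j hj⟩
    have hgood : ∀ B ∈ P, (B ∩ U).Nonempty → ∀ j, B = (e j).map g →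
        B.card * (m - 1) ≤ suppCost T B := by
      intro B hB hBU j hj
      refine le_suppCost T B j fun k hag => ?_
      have h2 := hagree B hB hBU k hag
      rw [hj] at h2
      exact (hinj (hgmap h2)).symm
    have hlow : ∀ B ∈ P, (B ∩ U).card * (m - 1) ≤ suppCost T B := by
      intro B hB
      by_cases hBU : (B ∩ U).Nonempty
      · have hc : (B ∩ U).card ≤ B.card := Finset.card_le_card Finset.inter_subset_left
        by_cases hex : ∃ j, B = (e j).map g
        · obtain ⟨j, hj⟩ := hex
          exact (Nat.mul_le_mul_right _ hc).trans (hgood B hB hBU j hj)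
        · rw [hbad B hB hBU hex]
          exact Nat.mul_le_mul hc (Nat.sub_le _ _)
      · rw [Finset.not_nonempty_iff_eq_empty.1 hBU]; simp
    have hUsum : ∑ B ∈ P, (B ∩ U).card = 3 * n := by
      rw [← Finset.card_biUnion]
      · have : (P.biUnion fun B => B ∩ U) = U := by
          ext i
          simp only [Finset.mem_biUnion, Finset.mem_inter]
          refine ⟨fun ⟨_, _, _, h⟩ => h, fun h => ?_⟩
          obtain ⟨B, hB, hi⟩ := hcov i
          exact ⟨B, hB, hi, h⟩
        rw [this, hU, Finset.card_map, Finset.card_univ, Fintype.card_fin]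
      · intro B hB B' hB' hBB
        exact (hdisj B hB B' hB' hBB).mono Finset.inter_subset_left Finset.inter_subset_left
    have hall : ∀ B ∈ P, (B ∩ U).Nonempty → ∃ j, B = (e j).map g := by
      intro B hB hBU
      by_contra hno
      have hstrict : (B ∩ U).card * (m - 1) < suppCost T B := by
        rw [hbad B hB hBU hno]
        have hc : (B ∩ U).card ≤ B.card := Finset.card_le_card Finset.inter_subset_left
        have hp : 0 < B.card := (hne B hB).card_pos
        calc _ ≤ B.card * (m - 1) := Nat.mul_le_mul_right _ hc
          _ < _ := Nat.mul_lt_mul_of_pos_left (by omega) hp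
      have := Finset.sum_lt_sum hlow ⟨B, hB, hstrict⟩
      rw [← Finset.sum_mul, hUsum] at this
      unfold partCost at hcost
      omega
    refine ⟨Finset.univ.filter (fun j => (e j).map g ∈ P), ?_, ?_⟩
    rotate_left
    · ext i
      simp only [Finset.mem_biUnion, Finset.mem_filter, Finset.mem_univ, true_and, iff_true]
      obtain ⟨B, hB, hi⟩ := hcov (g i)
      obtain ⟨j, rfl⟩ := hall B hB ⟨g i, Finset.mem_inter.2 ⟨hi, (hUmem _).2 (glt i)⟩⟩
      exact ⟨j, hB, (Finset.mem_map' g).1 hi⟩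
    · set M := Finset.univ.filter (fun j => (e j).map g ∈ P) with hM
      have hcovM : M.biUnion e = Finset.univ := by
        ext i
        simp only [hM, Finset.mem_biUnion, Finset.mem_filter, Finset.mem_univ, true_and, iff_true]
        obtain ⟨B, hB, hi⟩ := hcov (g i)
        obtain ⟨j, rfl⟩ := hall B hB ⟨g i, Finset.mem_inter.2 ⟨hi, (hUmem _).2 (glt i)⟩⟩
        exact ⟨j, hB, (Finset.mem_map' g).1 hi⟩
      have hcd : (M.biUnion e).card = ∑ j ∈ M, (e j).card := by
        refine Finset.card_biUnion ?_
        intro a ha b hb hab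
        have := hdisj _ (Finset.mem_filter.1 ha).2 _ (Finset.mem_filter.1 hb).2
          (fun h => hab (hinj (hgmap h)))
        exact (Finset.disjoint_map g).1 this
      rw [hcovM, Finset.card_univ, Fintype.card_fin,
        Finset.sum_congr rfl (fun j _ => he3 j)] at hcd
      simp at hcd
      omega

theorem stmt12 (n m n' : ℕ) (hn : 1 ≤ n) (hm : 1 ≤ m)
    (t : ℚ) (ht1 : 1 / 3 ≤ t) (ht2 : t < 1 / 2)
    (hn' : (n' : ℚ) = 3 * (n : ℚ) / (1 - 2 * t))
    (χ : Fin (3 * n) → Fin 3)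
    (hχ : ∀ v : Fin 3, (Finset.univ.filter (fun i => χ i = v)).card = n)
    (e : Fin m → Finset (Fin (3 * n))) (hinj : Function.Injective e)
    (he3 : ∀ j, (e j).card = 3)
    (hfib : ∀ j, ∀ v : Fin 3, ((e j).filter (fun i => χ i = v)).card = 1) :
    (∃ M : Finset (Fin m), M.card = n ∧ M.biUnion e = Finset.univ) ↔
    (∃ P : Finset (Finset (Fin n')), IsRowPartition P ∧
      (∀ B ∈ P,
        EMD d4
          (SAdist (fun i : Fin n' =>
            if h : (i : ℕ) < 3 * n then Fin.castSucc (χ ⟨(i : ℕ), h⟩) else 3) B)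
          (SAdist (fun i : Fin n' =>
            if h : (i : ℕ) < 3 * n then Fin.castSucc (χ ⟨(i : ℕ), h⟩) else 3)
            Finset.univ) ≤ (t : ℝ)) ∧
      partCost
        (fun (i : Fin n') (j : Fin m) =>
          if h : (i : ℕ) < 3 * n then
            (if (⟨(i : ℕ), h⟩ : Fin (3 * n)) ∈ e j then 0 else (i : ℕ) + 1)
          else (i : ℕ) + 1) P ≤ 3 * n * (m - 1)) := by
  have hpos : (0 : ℚ) < 1 - 2 * t := by linarith
  have hnq : (1 : ℚ) ≤ n := by exact_mod_cast hn
  have hmul : (n' : ℚ) * (1 - 2 * t) = 3 * n := by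
    rw [hn']; field_simp
  have hle : 3 * n ≤ n' := by
    have h0 : (0 : ℚ) ≤ n' := Nat.cast_nonneg _
    have : (3 * n : ℚ) ≤ n' := by nlinarith
    exact_mod_cast this
  have hmulR : (n' : ℝ) * (1 - 2 * (t : ℝ)) = 3 * n := by exact_mod_cast hmul
  have hn'pos : (0 : ℝ) < n' := by
    have : 0 < n' := by omega
    exact_mod_cast this
  have t1 : (1 / 3 : ℝ) ≤ (t : ℝ) := by have := (Rat.cast_le (K := ℝ)).2 ht1; push_cast at this; exact this
  have t2 : (t : ℝ) < (1 / 2 : ℝ) := by have := (Rat.cast_lt (K := ℝ)).2 ht2; push_cast at this; exact this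
  refine core n m n' hn hm (t : ℝ) t1 t2 hle ?_ χ hχ e hinj he3 hfib _ ?_ ?_ _ ?_ ?_
  · rw [div_eq_div_iff hn'pos.ne' (by norm_num)]
    linarith
  · intro i
    simp
  · intro i hi
    simp [hi]
  · intro i j hij
    simp [hij]
  · intro i j hij
    by_cases h : (i : ℕ) < 3 * n
    · have : (⟨(i : ℕ), h⟩ : Fin (3 * n)) ∉ e j := fun hk => hij ⟨_, hk, rfl⟩
      simp [h, this]
    · simp [h]
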